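/- Let n ≥ 1 and p > 1. There exists a sequence of centered probability measures dμ_k = f_k dγ on ℝⁿ, each with finite second moment, such that lim_{k→∞} δ_Tal(μ_k) = 0 and lim_{k→∞} W_p(μ_k, γ) = ∞. -/

import Mathlib

/-!
Let `μ = (1 - 2ε) γ + ε (γ translated by v) + ε (γ translated by -v)`. Each translate of `γ` has
`2H = |v|² = W₂²`, so it is an equality case of Talagrand's inequality, and splitting off a tiny
amount of mass does not spoil this: both `2H(μ)` and `W₂²(μ, γ)` equal `2ε|v|²` up to errors that
vanish when `ε → 0` and `ε|v| → 0` sufficiently fast. Meanwhile `W_p^p(μ, γ)` is of order `ε|v|^p`.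
With `ε = |v|^{-q}`, `1 < q < p`, and `|v| → ∞`, the deficit tends to `0` and `W_p` to infinity.

* Entropy (`relEnt_mixDens_bounds`): `2H(μ) ≤ 2ε|v|²` by convexity of `t log t`, and the loss is at
  most twice the Shannon entropy of the weights.
* Upper bound for the cost (`transCost_mixDens_le`): leaving the central part in place and
  translating the bumps costs `2ε|v|^p`. This bound also shows that the infimum defining `W_p` is
  finite.
* Lower bound for `W₂²` (`transCost_lower_two`): a point `y` with `|y| ≤ R` satisfies
  `|x - y| ≥ (|x| - R)₊`, which integrates to `2ε|v|²` up to `O(εR(1 + |v|))`; the region `|y| > R`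
  is handled by Young's inequality and the Gaussian tail of `γ`.
* Lower bound for `W_p` (`transCost_lower_p`): compare `p`-th moments.

The sequence is `|v| = e^K`, `ε = e^{-qK}`, with `R = K` and `δ = e^{-2K}` in the lower bound, where
`K = k + 1`.
-/

open MeasureTheory Filter Real Topology

noncomputable section

/-- Euclidean space `ℝⁿ`. -/
abbrev En (n : ℕ) := EuclideanSpace ℝ (Fin n)

/-- The standard Gaussian measure `dγ = (2π)^{-n/2} e^{-|x|²/2} dx` on `ℝⁿ`. -/
def stdGauss (n : ℕ) : Measure (En n) :=
  (volume : Measure (En n)).withDensity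
    (fun x => ENNReal.ofReal ((2 * π) ^ (-(n : ℝ) / 2) * Real.exp (-‖x‖ ^ 2 / 2)))

/-- The probability measure `dμ = f dγ` with density `f` with respect to the Gaussian. -/
def densMeasure {n : ℕ} (f : En n → ℝ) : Measure (En n) :=
  (stdGauss n).withDensity (fun x => ENNReal.ofReal (f x))

/-- Relative entropy `H(μ) = ∫ f log f dγ` of `dμ = f dγ`. -/
def relEnt {n : ℕ} (f : En n → ℝ) : ℝ :=
  ∫ x, f x * Real.log (f x) ∂(stdGauss n)

/-- Fisher information `I(μ) = ∫ |∇f|²/f dγ` of `dμ = f dγ`. -/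
def fisherInfo {n : ℕ} (f : En n → ℝ) : ℝ :=
  ∫ x, ‖gradient f x‖ ^ 2 / f x ∂(stdGauss n)

/-- Deficit of the logarithmic Sobolev inequality, `δ(μ) = I(μ)/2 − H(μ)`. -/
def lsiDeficit {n : ℕ} (f : En n → ℝ) : ℝ :=
  fisherInfo f / 2 - relEnt f

/-- The `p`-th moment `m_p(μ) = ∫ |x|^p dμ`. -/
def moment {n : ℕ} (p : ℝ) (μ : Measure (En n)) : ℝ := ∫ x, ‖x‖ ^ p ∂μ

/-- A measure is centered if `∫ x dμ = 0`. -/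
def IsCentered {n : ℕ} (μ : Measure (En n)) : Prop := (∫ x, x ∂μ) = 0

/-- `π'` is a coupling of `μ` and `ν`. -/
def IsCoupling {n : ℕ} (π' : Measure (En n × En n)) (μ ν : Measure (En n)) : Prop :=
  IsProbabilityMeasure π' ∧ π'.map Prod.fst = μ ∧ π'.map Prod.snd = ν

/-- Wasserstein distance of order `p`:
`W_p(μ,ν) = inf_π (∫∫ |x−y|^p dπ)^{1/p}` over couplings `π`. -/
def wasserstein {n : ℕ} (p : ℝ) (μ ν : Measure (En n)) : ℝ :=
  ((⨅ (π' : Measure (En n × En n)) (_ : IsCoupling π' μ ν),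
      ∫⁻ z, ENNReal.ofReal (‖z.1 - z.2‖ ^ p) ∂π') ^ (1 / p)).toReal

/-- Deficit of Talagrand's inequality, `δ_Tal(μ) = 2H(μ) − W₂²(μ,γ)` for `dμ = f dγ`. -/
def talDeficit {n : ℕ} (f : En n → ℝ) : ℝ :=
  2 * relEnt f - wasserstein 2 (densMeasure f) (stdGauss n) ^ 2

/-- The `L^p(dμ)` norm of a real function. -/
def LpNorm {n : ℕ} (p : ℝ) (μ : Measure (En n)) (u : En n → ℝ) : ℝ :=
  (∫ x, |u x| ^ p ∂μ) ^ (1 / p)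

/-! ### Gaussian integrals -/

lemma lintegral_exp_stdGauss (n : ℕ) (c : ℝ) (hc : c < 1 / 2) :
    ∫⁻ x, ENNReal.ofReal (Real.exp (c * ‖x‖ ^ 2)) ∂(stdGauss n) =
      ENNReal.ofReal ((1 - 2 * c) ^ (-(n : ℝ) / 2)) := by
  have hb : 0 < 1 / 2 - c := by linarith
  have hint := GaussianFourier.integral_rexp_neg_mul_sq_norm (V := En n) hb
  have hI : Integrable (fun x : En n => Real.exp (-(1 / 2 - c) * ‖x‖ ^ 2)) := by
    apply Integrable.of_integral_ne_zero
    rw [hint]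
    positivity
  rw [stdGauss, lintegral_withDensity_eq_lintegral_mul _ (by fun_prop) (by fun_prop)]
  have hmul : ∀ x : En n, ENNReal.ofReal ((2 * π) ^ (-(n : ℝ) / 2) *
      Real.exp (-‖x‖ ^ 2 / 2)) * ENNReal.ofReal (Real.exp (c * ‖x‖ ^ 2)) =
      ENNReal.ofReal ((2 * π) ^ (-(n : ℝ) / 2) * Real.exp (-(1 / 2 - c) * ‖x‖ ^ 2)) := by
    intro x
    rw [← ENNReal.ofReal_mul (by positivity), mul_assoc, ← Real.exp_add]
    congr 3
    ring
  simp_rw [Pi.mul_apply, hmul]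
  rw [← ofReal_integral_eq_lintegral_ofReal (hI.const_mul _)
    (ae_of_all _ fun x => by positivity), integral_const_mul, hint]
  congr 1
  have h2 : π / (1 / 2 - c) = (2 * π) * (1 - 2 * c)⁻¹ := by
    have : (1 - 2 * c) ≠ 0 := by linarith
    field_simp
  have h3 : 0 < 1 - 2 * c := by linarith
  rw [h2, Real.mul_rpow (x := 2 * π) (y := (1 - 2 * c)⁻¹) (by positivity) (by positivity),
    ← mul_assoc,
    ← Real.rpow_add (by positivity), Real.inv_rpow h3.le, ← Real.rpow_neg h3.le]
  simp [neg_div]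

instance isProbabilityMeasure_stdGauss (n : ℕ) : IsProbabilityMeasure (stdGauss n) := by
  constructor
  have := lintegral_exp_stdGauss n 0 (by norm_num)
  simpa using this

lemma rpow_le_exp_sq (p : ℝ) (hp : 0 < p) :
    ∃ C : ℝ, 0 ≤ C ∧ ∀ t : ℝ, 0 ≤ t → t ^ p ≤ C * Real.exp (1 / 4 * t ^ 2) := by
  refine ⟨Real.exp (p / 2 * Real.log (2 * p)), by positivity, fun t ht => ?_⟩
  rcases ht.eq_or_lt with rfl | ht
  · rw [Real.zero_rpow hp.ne']; positivity
  rw [← Real.exp_add, Real.rpow_def_of_pos ht]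
  apply Real.exp_le_exp.2
  have h1 := Real.log_le_sub_one_of_pos (show 0 < t ^ 2 / (2 * p) by positivity)
  rw [Real.log_div (by positivity) (by positivity), Real.log_pow] at h1
  push_cast at h1
  have h2 : p / 2 * (2 * Real.log t - Real.log (2 * p)) ≤ p / 2 * (t ^ 2 / (2 * p)) := by
    gcongr; linarith
  have h3 : p / 2 * (t ^ 2 / (2 * p)) = 1 / 4 * t ^ 2 := by field_simp; norm_num
  linarith

lemma integrable_norm_rpow_stdGauss (n : ℕ) (p : ℝ) (hp : 0 < p) :
    Integrable (fun x : En n => ‖x‖ ^ p) (stdGauss n) := by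
  obtain ⟨C, hC, h⟩ := rpow_le_exp_sq p hp
  have hI : Integrable (fun x : En n => C * Real.exp (1 / 4 * ‖x‖ ^ 2)) (stdGauss n) := by
    refine Integrable.const_mul ⟨by fun_prop, ?_⟩ _
    rw [hasFiniteIntegral_iff_ofReal (ae_of_all _ fun x => by positivity),
      lintegral_exp_stdGauss n _ (by norm_num)]
    exact ENNReal.ofReal_lt_top
  refine hI.mono' (Measurable.aestronglyMeasurable (by fun_prop)) (ae_of_all _ fun x => ?_)
  rw [Real.norm_of_nonneg (by positivity)]
  exact h _ (norm_nonneg x)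

/-! ### The mixture of three Gaussians -/

/-- The density with respect to `γ` of the translate of `γ` by `v`. -/
def shiftDens {n : ℕ} (v : En n) (x : En n) : ℝ := Real.exp (inner ℝ v x - ‖v‖ ^ 2 / 2)

@[fun_prop]
lemma continuous_shiftDens {n : ℕ} (v : En n) : Continuous (shiftDens v) := by
  unfold shiftDens; fun_prop

lemma shiftDens_pos {n : ℕ} (v x : En n) : 0 < shiftDens v x := Real.exp_pos _

/-- The Cameron–Martin formula: `shiftDens v` is the density of the law of `Z + v`, `Z ∼ γ`. -/
lemma densMeasure_shiftDens {n : ℕ} (v : En n) :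
    densMeasure (shiftDens v) = (stdGauss n).map (fun z => z + v) := by
  ext s hs
  rw [densMeasure, withDensity_apply _ hs, Measure.map_apply (by fun_prop) hs, stdGauss,
    withDensity_apply _ (hs.preimage (by fun_prop)),
    setLIntegral_withDensity_eq_setLIntegral_mul _ (by fun_prop) (by fun_prop) hs,
    ← lintegral_indicator hs, ← lintegral_indicator (hs.preimage (by fun_prop)),
    ← lintegral_add_right_eq_self _ v]
  congr 1 with z
  by_cases h : z + v ∈ s
  · rw [Set.indicator_of_mem h, Set.indicator_of_mem (by exact h), Pi.mul_apply,
      ← ENNReal.ofReal_mul (by positivity), shiftDens, mul_assoc, ← Real.exp_add]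
    congr 3
    rw [norm_add_sq_real, inner_add_right, real_inner_self_eq_norm_sq, real_inner_comm]
    ring
  · rw [Set.indicator_of_notMem h, Set.indicator_of_notMem (by exact h)]

/-- The density with respect to `γ` of the mixture giving weight `1 - 2ε` to `γ` and weight `ε` to
each of its translates by `v` and `-v`. -/
def mixDens {n : ℕ} (ε : ℝ) (v : En n) (x : En n) : ℝ :=
  (1 - 2 * ε) + ε * shiftDens v x + ε * shiftDens (-v) x

@[fun_prop]
lemma continuous_mixDens {n : ℕ} (ε : ℝ) (v : En n) : Continuous (mixDens ε v) := by
  unfold mixDens; fun_prop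

lemma densMeasure_mixDens {n : ℕ} {ε : ℝ} (h0 : 0 < ε) (h1 : 2 * ε < 1) (v : En n) :
    densMeasure (mixDens ε v) = ENNReal.ofReal (1 - 2 * ε) • stdGauss n +
      ENNReal.ofReal ε • (stdGauss n).map (fun z => z + v) +
      ENNReal.ofReal ε • (stdGauss n).map (fun z => z + -v) := by
  have h2 : 0 < 1 - 2 * ε := by linarith
  rw [← densMeasure_shiftDens, ← densMeasure_shiftDens]
  unfold densMeasure
  rw [← withDensity_smul _ (by fun_prop), ← withDensity_smul _ (by fun_prop),
    ← withDensity_const, ← withDensity_add_left (by fun_prop),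
    ← withDensity_add_left (by fun_prop)]
  congr 1 with x
  have := shiftDens_pos v x
  have := shiftDens_pos (-v) x
  simp only [Pi.add_apply, Pi.smul_apply, smul_eq_mul]
  rw [mixDens, ENNReal.ofReal_add (by positivity) (by positivity),
    ENNReal.ofReal_add (by positivity) (by positivity), ENNReal.ofReal_mul h0.le,
    ENNReal.ofReal_mul h0.le]

lemma lintegral_mixDens {n : ℕ} {ε : ℝ} (h0 : 0 < ε) (h1 : 2 * ε < 1) (v : En n)
    {h : En n → ENNReal} (hh : Measurable h) :
    ∫⁻ x, h x ∂(densMeasure (mixDens ε v)) = ENNReal.ofReal (1 - 2 * ε) * ∫⁻ z, h z ∂(stdGauss n) +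
      ENNReal.ofReal ε * ∫⁻ z, h (z + v) ∂(stdGauss n) +
      ENNReal.ofReal ε * ∫⁻ z, h (z + -v) ∂(stdGauss n) := by
  rw [densMeasure_mixDens h0 h1, lintegral_add_measure, lintegral_add_measure,
    lintegral_smul_measure, lintegral_smul_measure, lintegral_smul_measure,
    lintegral_map hh (by fun_prop), lintegral_map hh (by fun_prop)]
  simp

lemma ofReal_weights {ε : ℝ} (h0 : 0 < ε) (h1 : 2 * ε < 1) :
    ENNReal.ofReal (1 - 2 * ε) + ENNReal.ofReal ε + ENNReal.ofReal ε = 1 := by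
  rw [← ENNReal.ofReal_add (by linarith) h0.le, ← ENNReal.ofReal_add (by linarith) h0.le]
  simp; ring

lemma isProbabilityMeasure_mixDens {n : ℕ} {ε : ℝ} (h0 : 0 < ε) (h1 : 2 * ε < 1) (v : En n) :
    IsProbabilityMeasure (densMeasure (mixDens ε v)) := by
  constructor
  have := lintegral_mixDens h0 h1 v (h := fun _ => 1) (by fun_prop)
  simpa [ofReal_weights h0 h1] using this

lemma integral_eq_zero_of_odd {n : ℕ} {E : Type*} [NormedAddCommGroup E] [NormedSpace ℝ E]
    {h : En n → E} (hh : ∀ x, h (-x) = -h x) : ∫ x, h x ∂(stdGauss n) = 0 := by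
  have key : ∫ x, h x ∂(stdGauss n) = -∫ x, h x ∂(stdGauss n) := by
    unfold stdGauss
    rw [integral_withDensity_eq_integral_toReal_smul (by fun_prop) (by simp)]
    conv_lhs => rw [← integral_neg_eq_self]
    rw [← integral_neg]
    refine integral_congr_ae (ae_of_all _ fun x => ?_)
    simp only [hh, norm_neg, smul_neg]
  have h2 : (2 : ℝ) • ∫ x, h x ∂(stdGauss n) = 0 := by
    rw [two_smul]
    nth_rewrite 1 [key]
    simp
  simpa using h2

lemma isCentered_mixDens {n : ℕ} {ε : ℝ} (v : En n) :
    IsCentered (densMeasure (mixDens ε v)) := by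
  unfold IsCentered densMeasure
  rw [integral_withDensity_eq_integral_toReal_smul (by fun_prop) (by simp)]
  refine integral_eq_zero_of_odd fun x => ?_
  have h : mixDens ε v (-x) = mixDens ε v x := by
    simp only [mixDens, shiftDens, inner_neg_left, inner_neg_right, norm_neg, neg_neg]
    ring
  rw [h, smul_neg]

/-! ### Entropy of the mixture -/

lemma integrable_shiftDens_mul {n : ℕ} (v : En n) {h : En n → ℝ} (hc : Continuous h)
    (hi : Integrable (fun z => h (z + v)) (stdGauss n)) :
    Integrable (fun x => shiftDens v x * h x) (stdGauss n) := by
  have h1 : Integrable h (densMeasure (shiftDens v)) := by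
    rw [densMeasure_shiftDens, integrable_map_measure hc.aestronglyMeasurable (by fun_prop)]
    exact hi
  rw [densMeasure, integrable_withDensity_iff_integrable_smul' (by fun_prop) (by simp)] at h1
  simpa [ENNReal.toReal_ofReal (shiftDens_pos v _).le] using h1

lemma integral_shiftDens_mul {n : ℕ} (v : En n) {h : En n → ℝ} (hc : Continuous h) :
    ∫ x, shiftDens v x * h x ∂(stdGauss n) = ∫ z, h (z + v) ∂(stdGauss n) := by
  rw [← integral_map (f := h) (φ := fun z => z + v) (by fun_prop) hc.aestronglyMeasurable,
    ← densMeasure_shiftDens, densMeasure,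
    integral_withDensity_eq_integral_toReal_smul (by fun_prop) (by simp)]
  simp [ENNReal.toReal_ofReal (shiftDens_pos v _).le]

lemma log_shiftDens {n : ℕ} (v x : En n) :
    Real.log (shiftDens v x) = inner ℝ v x - ‖v‖ ^ 2 / 2 := Real.log_exp _

lemma integrable_inner_stdGauss {n : ℕ} (v : En n) :
    Integrable (fun z : En n => inner ℝ v z) (stdGauss n) := by
  have := (integrable_norm_rpow_stdGauss n 1 one_pos).const_mul ‖v‖
  simp only [Real.rpow_one] at this
  refine this.mono' (by fun_prop) (ae_of_all _ fun z => norm_inner_le_norm v z)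

lemma shiftDens_log_shiftDens {n : ℕ} (v : En n) :
    Integrable (fun x => shiftDens v x * Real.log (shiftDens v x)) (stdGauss n) ∧
    ∫ x, shiftDens v x * Real.log (shiftDens v x) ∂(stdGauss n) = ‖v‖ ^ 2 / 2 := by
  have he : ∀ z : En n, inner ℝ v (z + v) - ‖v‖ ^ 2 / 2 = inner ℝ v z + ‖v‖ ^ 2 / 2 := by
    intro z; rw [inner_add_right, real_inner_self_eq_norm_sq]; ring
  have hi := (integrable_inner_stdGauss v).add (integrable_const (‖v‖ ^ 2 / 2))
  simp_rw [log_shiftDens]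
  constructor
  · refine integrable_shiftDens_mul v (by fun_prop) ?_
    simp_rw [he]
    exact hi
  · rw [integral_shiftDens_mul v (h := fun x => inner ℝ v x - ‖v‖ ^ 2 / 2) (by fun_prop)]
    simp_rw [he]
    rw [integral_add (integrable_inner_stdGauss v) (integrable_const _),
      integral_eq_zero_of_odd (fun x => by simp)]
    simp

lemma shiftDens_integral {n : ℕ} (v : En n) :
    Integrable (shiftDens v) (stdGauss n) ∧ ∫ x, shiftDens v x ∂(stdGauss n) = 1 := by
  have h1 := integrable_shiftDens_mul v (h := fun _ => 1) (by fun_prop) (integrable_const _)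
  have h2 := integral_shiftDens_mul v (h := fun _ => 1) (by fun_prop)
  simp only [mul_one] at h1 h2
  exact ⟨h1, by simpa using h2⟩

/-- The entropy of the mixture lies below the average `ε |v|²` of the entropies of its components
by at most the Shannon entropy of the weights. The upper bound is convexity of `t log t`;
the lower bound holds because the mixture density dominates each of its weighted components. -/
lemma relEnt_mixDens_bounds {n : ℕ} {ε : ℝ} (h0 : 0 < ε) (h1 : 2 * ε < 1) (v : En n) :
    ε * ‖v‖ ^ 2 + (2 * (ε * Real.log ε) + (1 - 2 * ε) * Real.log (1 - 2 * ε)) ≤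
      relEnt (mixDens ε v) ∧ relEnt (mixDens ε v) ≤ ε * ‖v‖ ^ 2 := by
  have h2 : 0 < 1 - 2 * ε := by linarith
  obtain ⟨iA, eA⟩ := shiftDens_log_shiftDens v
  obtain ⟨iB, eB⟩ := shiftDens_log_shiftDens (-v)
  obtain ⟨ia, ea⟩ := shiftDens_integral v
  obtain ⟨ib, eb⟩ := shiftDens_integral (-v)
  rw [norm_neg] at eB
  have iU := (iA.add iB).const_mul ε
  have iL := (iU.add ((ia.add ib).const_mul (ε * Real.log ε))).add
    (integrable_const ((1 - 2 * ε) * Real.log (1 - 2 * ε)))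
  have eU := integral_const_mul (μ := stdGauss n) ε
    (fun x => shiftDens v x * Real.log (shiftDens v x) +
    shiftDens (-v) x * Real.log (shiftDens (-v) x))
  rw [integral_add iA iB, eA, eB] at eU
  have eL := integral_add (iU.add ((ia.add ib).const_mul (ε * Real.log ε)))
    (integrable_const ((1 - 2 * ε) * Real.log (1 - 2 * ε)))
  have eL2 := integral_add iU ((ia.add ib).const_mul (ε * Real.log ε))
  have eL3 := integral_const_mul (μ := stdGauss n) (ε * Real.log ε)
    (fun x => shiftDens v x + shiftDens (-v) x)
  rw [integral_add ia ib, ea, eb] at eL3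
  simp only [Pi.add_apply] at eL eL2 iU iL
  rw [eL2, eL3, eU, integral_const, probReal_univ, one_smul] at eL
  have pL : ∀ x : En n, ε * (shiftDens v x * Real.log (shiftDens v x) +
      shiftDens (-v) x * Real.log (shiftDens (-v) x)) +
      ε * Real.log ε * (shiftDens v x + shiftDens (-v) x) +
      (1 - 2 * ε) * Real.log (1 - 2 * ε) ≤ mixDens ε v x * Real.log (mixDens ε v x) := by
    intro x
    have p1 := shiftDens_pos v x
    have p2 := shiftDens_pos (-v) x
    have q1 : Real.log (1 - 2 * ε) ≤ Real.log (mixDens ε v x) := by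
      apply Real.log_le_log h2
      unfold mixDens
      nlinarith
    have q2 : Real.log ε + Real.log (shiftDens v x) ≤ Real.log (mixDens ε v x) := by
      rw [← Real.log_mul h0.ne' p1.ne']
      apply Real.log_le_log (by positivity)
      unfold mixDens
      nlinarith
    have q3 : Real.log ε + Real.log (shiftDens (-v) x) ≤ Real.log (mixDens ε v x) := by
      rw [← Real.log_mul h0.ne' p2.ne']
      apply Real.log_le_log (by positivity)
      unfold mixDens
      nlinarith
    have r1 := mul_le_mul_of_nonneg_left q1 h2.le
    have r2 := mul_le_mul_of_nonneg_left q2 (mul_pos h0 p1).le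
    have r3 := mul_le_mul_of_nonneg_left q3 (mul_pos h0 p2).le
    have : mixDens ε v x * Real.log (mixDens ε v x) =
      (1 - 2 * ε) * Real.log (mixDens ε v x) + ε * shiftDens v x * Real.log (mixDens ε v x)
      + ε * shiftDens (-v) x * Real.log (mixDens ε v x) := by
      rw [← add_mul, ← add_mul]; rfl
    rw [this]
    linarith
  have pU : ∀ x : En n, mixDens ε v x * Real.log (mixDens ε v x) ≤
      ε * (shiftDens v x * Real.log (shiftDens v x) +
      shiftDens (-v) x * Real.log (shiftDens (-v) x)) := by
    intro x
    have p1 := shiftDens_pos v x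
    have p2 := shiftDens_pos (-v) x
    have := Real.convexOn_mul_log.map_sum_le (t := Finset.univ)
      (w := ![1 - 2 * ε, ε, ε]) (p := ![1, shiftDens v x, shiftDens (-v) x])
      (by intro i _; fin_cases i <;> simp <;> linarith)
      (by simp [Fin.sum_univ_three]; ring)
      (by intro i _; fin_cases i <;> simp <;> positivity)
    simp [Fin.sum_univ_three] at this
    unfold mixDens
    linarith
  have iF : Integrable (fun x => mixDens ε v x * Real.log (mixDens ε v x)) (stdGauss n) := by
    refine integrable_of_le_of_le (Measurable.aestronglyMeasurable (by fun_prop))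
      (ae_of_all _ pL) (ae_of_all _ pU) iL iU
  unfold relEnt
  constructor
  · refine le_trans (le_of_eq ?_) (integral_mono iL iF pL)
    exact Eq.trans (by ring) eL.symm
  · refine (integral_mono iF iU pU).trans (le_of_eq ?_)
    exact eU.trans (by ring)

/-! ### Transport cost of the mixture -/

/-- The optimal transport cost `W_p^p`, with values in `[0, ∞]`. -/
def transCost {n : ℕ} (p : ℝ) (μ ν : Measure (En n)) : ENNReal :=
  ⨅ (π' : Measure (En n × En n)) (_ : IsCoupling π' μ ν),
      ∫⁻ z, ENNReal.ofReal (‖z.1 - z.2‖ ^ p) ∂π'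

lemma wasserstein_eq {n : ℕ} (p : ℝ) (μ ν : Measure (En n)) :
    wasserstein p μ ν = (transCost p μ ν).toReal ^ (1 / p) := by
  rw [wasserstein, transCost, ENNReal.toReal_rpow]

/-- Couple `μ` with `γ` by leaving the central part in place and translating each bump. -/
lemma transCost_mixDens_le {n : ℕ} {ε : ℝ} (h0 : 0 < ε) (h1 : 2 * ε < 1) (v : En n)
    {p : ℝ} (hp : 0 < p) :
    transCost p (densMeasure (mixDens ε v)) (stdGauss n) ≤ ENNReal.ofReal (2 * ε * ‖v‖ ^ p) := by
  set T : En n → En n → En n × En n := fun u z => (z + u, z) with hT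
  have mT : ∀ u, Measurable (T u) := fun u => by fun_prop
  set P : Measure (En n × En n) := ENNReal.ofReal (1 - 2 * ε) • (stdGauss n).map (T 0) +
      ENNReal.ofReal ε • (stdGauss n).map (T v) + ENNReal.ofReal ε • (stdGauss n).map (T (-v))
    with hP
  have hfst : P.map Prod.fst = densMeasure (mixDens ε v) := by
    rw [densMeasure_mixDens h0 h1, hP, Measure.map_add _ _ measurable_fst,
      Measure.map_add _ _ measurable_fst, Measure.map_smul, Measure.map_smul, Measure.map_smul,
      Measure.map_map measurable_fst (mT _), Measure.map_map measurable_fst (mT _),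
      Measure.map_map measurable_fst (mT _)]
    congr 3
    convert Measure.map_id
    ext1 z
    simp [hT]
  have hsnd : P.map Prod.snd = stdGauss n := by
    have : ∀ u, Prod.snd ∘ T u = id := fun u => rfl
    rw [hP, Measure.map_add _ _ measurable_snd,
      Measure.map_add _ _ measurable_snd, Measure.map_smul, Measure.map_smul, Measure.map_smul,
      Measure.map_map measurable_snd (mT _), Measure.map_map measurable_snd (mT _),
      Measure.map_map measurable_snd (mT _), this, this, this, Measure.map_id, ← add_smul,
      ← add_smul, ofReal_weights h0 h1, one_smul]
  have hprob : IsProbabilityMeasure P := by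
    constructor
    have := congrArg (fun m => m Set.univ) hsnd
    simpa [Measure.map_apply measurable_snd MeasurableSet.univ] using this
  refine (iInf₂_le P ⟨hprob, hfst, hsnd⟩).trans (le_of_eq ?_)
  rw [hP, lintegral_add_measure, lintegral_add_measure,
    lintegral_smul_measure, lintegral_smul_measure, lintegral_smul_measure,
    lintegral_map (by fun_prop) (mT _), lintegral_map (by fun_prop) (mT _),
    lintegral_map (by fun_prop) (mT _)]
  simp only [hT, add_sub_cancel_left, norm_neg, norm_zero, Real.zero_rpow hp.ne', lintegral_const,
    measure_univ, mul_one, smul_eq_mul, ENNReal.ofReal_zero, mul_zero, zero_add]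
  rw [← ENNReal.ofReal_mul h0.le, ← ENNReal.ofReal_add (by positivity) (by positivity)]
  ring_nf

lemma transCost_mixDens_ne_top {n : ℕ} {ε : ℝ} (h0 : 0 < ε) (h1 : 2 * ε < 1) (v : En n)
    {p : ℝ} (hp : 0 < p) :
    transCost p (densMeasure (mixDens ε v)) (stdGauss n) ≠ ⊤ :=
  ((transCost_mixDens_le h0 h1 v hp).trans_lt ENNReal.ofReal_lt_top).ne

/-- The easy half of Kantorovich duality, for potentials `A - B` and `-D`; the scalar `K` and the
splitting of the potentials keep every term in `[0, ∞]`. -/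
lemma lintegral_le_transCost {n : ℕ} {p : ℝ} {μ ν : Measure (En n)} {A B D : En n → ENNReal}
    {K : ENNReal} (hK0 : K ≠ 0) (hK : K ≠ ⊤)
    (hA : Measurable A) (hB : Measurable B) (hD : Measurable D)
    (h : ∀ x y, A x ≤ K * ENNReal.ofReal (‖x - y‖ ^ p) + B x + D y) :
    ∫⁻ x, A x ∂μ ≤ K * transCost p μ ν + ∫⁻ x, B x ∂μ + ∫⁻ y, D y ∂ν := by
  have key : ∀ (P : Measure (En n × En n)) (_ : IsCoupling P μ ν), ∫⁻ x, A x ∂μ ≤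
      K * (∫⁻ z, ENNReal.ofReal (‖z.1 - z.2‖ ^ p) ∂P) + ∫⁻ x, B x ∂μ + ∫⁻ y, D y ∂ν := by
    rintro P ⟨-, rfl, rfl⟩
    rw [lintegral_map hA measurable_fst, lintegral_map hB measurable_fst,
      lintegral_map hD measurable_snd, ← lintegral_const_mul _ (by fun_prop),
      ← lintegral_add_left (by fun_prop), ← lintegral_add_left (by fun_prop)]
    exact lintegral_mono fun z => h z.1 z.2
  unfold transCost
  rw [ENNReal.mul_iInf_of_ne hK0 hK, ENNReal.iInf_add, ENNReal.iInf_add]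
  refine le_iInf fun P => ?_
  rw [ENNReal.mul_iInf_of_ne hK0 hK, ENNReal.iInf_add, ENNReal.iInf_add]
  exact le_iInf fun hP => key P hP

lemma le_lintegral_mixDens {n : ℕ} {ε : ℝ} (h0 : 0 < ε) (h1 : 2 * ε < 1) (v : En n)
    {h : En n → ENNReal} (hh : Measurable h) :
    ENNReal.ofReal ε * ∫⁻ z, (h (z + v) + h (z + -v)) ∂(stdGauss n) ≤
      ∫⁻ x, h x ∂(densMeasure (mixDens ε v)) := by
  rw [lintegral_mixDens h0 h1 v hh, lintegral_add_left (by fun_prop), mul_add, add_assoc]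
  exact le_add_self

/-- `|x|^p ≤ 2^{p-1} (|x-y|^p + |y|^p)` bounds the cost below by the `p`-th moment of the mixture,
which is at least `ε |v|^p` since one of `z + v`, `z - v` always has norm at least `|v|`. -/
lemma transCost_lower_p {n : ℕ} {ε : ℝ} (h0 : 0 < ε) (h1 : 2 * ε < 1) (v : En n)
    {p : ℝ} (hp : 1 ≤ p) :
    ε * ‖v‖ ^ p ≤ 2 ^ (p - 1) *
      ((transCost p (densMeasure (mixDens ε v)) (stdGauss n)).toReal +
        ∫ z, ‖z‖ ^ p ∂(stdGauss n)) := by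
  have hp0 : 0 < p := by linarith
  have hc : (0 : ℝ) ≤ 2 ^ (p - 1) := by positivity
  have pt : ∀ x y : En n, ENNReal.ofReal (‖x‖ ^ p) ≤
      ENNReal.ofReal (2 ^ (p - 1)) * ENNReal.ofReal (‖x - y‖ ^ p) + 0 +
        ENNReal.ofReal (2 ^ (p - 1) * ‖y‖ ^ p) := by
    intro x y
    rw [add_zero, ← ENNReal.ofReal_mul hc, ← ENNReal.ofReal_add (by positivity) (by positivity)]
    apply ENNReal.ofReal_le_ofReal
    have h2 : ‖x‖ ≤ ‖x - y‖ + ‖y‖ := by simpa using norm_add_le (x - y) y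
    have h3 := NNReal.rpow_add_le_mul_rpow_add_rpow ‖x - y‖₊ ‖y‖₊ hp
    have h4 : (‖x - y‖ + ‖y‖) ^ p ≤ 2 ^ (p - 1) * (‖x - y‖ ^ p + ‖y‖ ^ p) := by exact_mod_cast h3
    rw [← mul_add]
    exact (Real.rpow_le_rpow (norm_nonneg x) h2 hp0.le).trans h4
  have hd := lintegral_le_transCost (μ := densMeasure (mixDens ε v)) (ν := stdGauss n)
    (B := fun _ => 0) (by simp; positivity) ENNReal.ofReal_ne_top (by fun_prop) (by fun_prop) (by fun_prop) pt
  have hl := le_lintegral_mixDens h0 h1 v (h := fun x => ENNReal.ofReal (‖x‖ ^ p)) (by fun_prop)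
  have hl2 : ENNReal.ofReal (‖v‖ ^ p) ≤ ∫⁻ z, (ENNReal.ofReal (‖z + v‖ ^ p) +
      ENNReal.ofReal (‖z + -v‖ ^ p)) ∂(stdGauss n) := by
    calc ENNReal.ofReal (‖v‖ ^ p) = ∫⁻ z, ENNReal.ofReal (‖v‖ ^ p) ∂(stdGauss n) := by simp
      _ ≤ _ := lintegral_mono fun z => by
        rw [← ENNReal.ofReal_add (by positivity) (by positivity)]
        apply ENNReal.ofReal_le_ofReal
        have h2 : ‖(2 : ℝ) • v‖ ≤ ‖z + v‖ + ‖z + -v‖ := by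
          have : (2 : ℝ) • v = (z + v) - (z + -v) := by rw [two_smul]; abel
          rw [this]; exact norm_sub_le _ _
        rw [norm_smul, Real.norm_two] at h2
        rcases le_total ‖v‖ ‖z + v‖ with h | h
        · have := Real.rpow_le_rpow (norm_nonneg v) h hp0.le
          have : 0 ≤ ‖z + -v‖ ^ p := by positivity
          linarith
        · have := Real.rpow_le_rpow (norm_nonneg v) (show ‖v‖ ≤ ‖z + -v‖ by linarith) hp0.le
          have : 0 ≤ ‖z + v‖ ^ p := by positivity
          linarith
  have hI := (integrable_norm_rpow_stdGauss n p hp0).const_mul (2 ^ (p - 1))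
  rw [← ofReal_integral_eq_lintegral_ofReal hI (ae_of_all _ fun x => by positivity),
    integral_const_mul, lintegral_zero, add_zero] at hd
  have hfin := transCost_mixDens_ne_top h0 h1 v hp0
  have hnn : 0 ≤ ∫ z, ‖z‖ ^ p ∂(stdGauss n) := integral_nonneg fun z => by positivity
  rw [← ENNReal.ofReal_toReal hfin, ← ENNReal.ofReal_mul hc,
    ← ENNReal.ofReal_add (by positivity) (by positivity)] at hd
  have := ((mul_le_mul_right hl2 (ENNReal.ofReal ε)).trans hl).trans hd
  rw [← ENNReal.ofReal_mul h0.le, ENNReal.ofReal_le_ofReal_iff (by positivity)] at this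
  linarith

lemma lintegral_sq_mixDens {n : ℕ} {ε : ℝ} (h0 : 0 < ε) (h1 : 2 * ε < 1) (v : En n) :
    ∫⁻ x, ENNReal.ofReal (‖x‖ ^ (2 : ℝ)) ∂(densMeasure (mixDens ε v)) =
      ENNReal.ofReal (∫ z, ‖z‖ ^ (2 : ℝ) ∂(stdGauss n) + 2 * ε * ‖v‖ ^ 2) := by
  have hI := integrable_norm_rpow_stdGauss n 2 two_pos
  have hnn : 0 ≤ ∫ z, ‖z‖ ^ (2 : ℝ) ∂(stdGauss n) := integral_nonneg fun z => by positivity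
  rw [lintegral_mixDens h0 h1 v (by fun_prop), add_assoc, ← mul_add,
    ← lintegral_add_left (by fun_prop)]
  have : ∀ z : En n, ENNReal.ofReal (‖z + v‖ ^ (2 : ℝ)) + ENNReal.ofReal (‖z + -v‖ ^ (2 : ℝ)) =
      ENNReal.ofReal (2 * ‖z‖ ^ (2 : ℝ) + 2 * ‖v‖ ^ 2) := by
    intro z
    rw [← ENNReal.ofReal_add (by positivity) (by positivity)]
    congr 1
    have := parallelogram_law_with_norm ℝ z v
    simp only [Real.rpow_two, ← sub_eq_add_neg]
    nlinarith
  have hI2 : Integrable (fun z : En n => 2 * ‖z‖ ^ (2 : ℝ) + 2 * ‖v‖ ^ 2) (stdGauss n) :=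
    (hI.const_mul 2).add (integrable_const _)
  simp_rw [this]
  rw [← ofReal_integral_eq_lintegral_ofReal hI (ae_of_all _ fun x => by positivity),
    ← ofReal_integral_eq_lintegral_ofReal hI2 (ae_of_all _ fun x => by positivity), integral_add (hI.const_mul 2) (integrable_const _),
    integral_const_mul, integral_const, probReal_univ, one_smul,
    ← ENNReal.ofReal_mul (by linarith), ← ENNReal.ofReal_mul h0.le,
    ← ENNReal.ofReal_add (mul_nonneg (by linarith) hnn) (by positivity)]
  congr 1
  ring

lemma integrable_sq_mixDens {n : ℕ} {ε : ℝ} (h0 : 0 < ε) (h1 : 2 * ε < 1) (v : En n) :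
    Integrable (fun x => ‖x‖ ^ (2 : ℝ)) (densMeasure (mixDens ε v)) := by
  refine ⟨Measurable.aestronglyMeasurable (by fun_prop), ?_⟩
  rw [hasFiniteIntegral_iff_ofReal (ae_of_all _ fun x => by positivity),
    lintegral_sq_mixDens h0 h1]
  exact ENNReal.ofReal_lt_top

/-- The duality potentials for the quadratic cost.
For `|y| ≤ R` the first term on the right suffices. For `|y| > R` Young's inequality with
parameter `δ` is used, and `|y|² / δ` is absorbed into the exponential term. -/
lemma cost_pointwise {n : ℕ} {δ R : ℝ} (hδ : 0 < δ) (hR : 0 ≤ R) (x y : En n) :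
    (max (‖x‖ - R) 0) ^ 2 ≤ ‖x - y‖ ^ (2 : ℝ) + δ * ‖x‖ ^ (2 : ℝ) +
      8 / δ * Real.exp (-R ^ 2 / 8) * Real.exp (1 / 4 * ‖y‖ ^ 2) := by
  simp only [Real.rpow_two]
  have hx := norm_nonneg x
  have hy := norm_nonneg y
  have hxy := norm_nonneg (x - y)
  rcases le_or_gt ‖y‖ R with h | h
  · have h2 : ‖x‖ - ‖y‖ ≤ ‖x - y‖ := norm_sub_norm_le x y
    have h3 : max (‖x‖ - R) 0 ≤ ‖x - y‖ := max_le (by linarith) hxy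
    have h4 := pow_le_pow_left₀ (le_max_right _ _) h3 2
    have h5 : 0 ≤ δ * ‖x‖ ^ 2 := by positivity
    have h6 : 0 ≤ 8 / δ * Real.exp (-R ^ 2 / 8) * Real.exp (1 / 4 * ‖y‖ ^ 2) := by positivity
    linarith
  · have h3 : max (‖x‖ - R) 0 ≤ ‖x‖ := max_le (by linarith) hx
    have h4 := pow_le_pow_left₀ (le_max_right _ _) h3 2
    have h5 : (‖x‖ - ‖y‖) ^ 2 ≤ ‖x - y‖ ^ 2 := by
      rw [← sq_abs]
      exact pow_le_pow_left₀ (abs_nonneg _) (abs_norm_sub_norm_le x y) 2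
    have h6 : ‖y‖ ^ 2 ≤ 8 * (Real.exp (-R ^ 2 / 8) * Real.exp (1 / 4 * ‖y‖ ^ 2)) := by
      have e1 := Real.add_one_le_exp (‖y‖ ^ 2 / 8)
      have e2 : Real.exp (‖y‖ ^ 2 / 8) ≤ Real.exp (-R ^ 2 / 8) * Real.exp (1 / 4 * ‖y‖ ^ 2) := by
        rw [← Real.exp_add]
        apply Real.exp_le_exp.2
        nlinarith
      linarith
    have h7 : 8 / δ * Real.exp (-R ^ 2 / 8) * Real.exp (1 / 4 * ‖y‖ ^ 2) =
        δ⁻¹ * (8 * (Real.exp (-R ^ 2 / 8) * Real.exp (1 / 4 * ‖y‖ ^ 2))) := by ring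
    have h8 : δ⁻¹ * ‖y‖ ^ 2 ≤ δ⁻¹ * (8 * (Real.exp (-R ^ 2 / 8) * Real.exp (1 / 4 * ‖y‖ ^ 2))) := by
      gcongr
    have h9 : 2 * ‖x‖ * ‖y‖ ≤ δ * ‖x‖ ^ 2 + δ⁻¹ * ‖y‖ ^ 2 := by
      have : 0 ≤ δ⁻¹ * (δ * ‖x‖ - ‖y‖) ^ 2 := by positivity
      have e : δ⁻¹ * (δ * ‖x‖ - ‖y‖) ^ 2 = δ * ‖x‖ ^ 2 + δ⁻¹ * ‖y‖ ^ 2 - 2 * ‖x‖ * ‖y‖ := by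
        field_simp; ring
      linarith
    rw [h7]
    nlinarith

/-- `W₂²` is at least `2 ε |v|²`, the cost of translating the two bumps, up to an error that
becomes small for suitable `R` and `δ`. -/
lemma transCost_lower_two {n : ℕ} {ε δ R : ℝ} (h0 : 0 < ε) (h1 : 2 * ε < 1) (hδ : 0 < δ)
    (hR : 0 ≤ R) (v : En n) :
    2 * ε * ‖v‖ ^ 2 ≤ (transCost 2 (densMeasure (mixDens ε v)) (stdGauss n)).toReal +
      (4 * ε * R * (∫ z, ‖z‖ ^ (1 : ℝ) ∂(stdGauss n) + ‖v‖) +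
       δ * (∫ z, ‖z‖ ^ (2 : ℝ) ∂(stdGauss n) + 2 * ε * ‖v‖ ^ 2) +
       8 / δ * Real.exp (-R ^ 2 / 8) * (1 - 2 * (1 / 4)) ^ (-(n : ℝ) / 2)) := by
  have hI1 := integrable_norm_rpow_stdGauss n 1 one_pos
  have hn1 : 0 ≤ ∫ z, ‖z‖ ^ (1 : ℝ) ∂(stdGauss n) := integral_nonneg fun z => by positivity
  have hn2 : 0 ≤ ∫ z, ‖z‖ ^ (2 : ℝ) ∂(stdGauss n) := integral_nonneg fun z => by positivity
  have hM : 0 ≤ 8 / δ * Real.exp (-R ^ 2 / 8) := by positivity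
  have hd := lintegral_le_transCost (p := 2) (μ := densMeasure (mixDens ε v)) (ν := stdGauss n)
    (A := fun x => ENNReal.ofReal ((max (‖x‖ - R) 0) ^ 2))
    (B := fun x => ENNReal.ofReal δ * ENNReal.ofReal (‖x‖ ^ (2 : ℝ)))
    (D := fun y => ENNReal.ofReal (8 / δ * Real.exp (-R ^ 2 / 8)) *
      ENNReal.ofReal (Real.exp (1 / 4 * ‖y‖ ^ 2)))
    one_ne_zero ENNReal.one_ne_top (by fun_prop) (by fun_prop) (by fun_prop) (fun x y => by
      rw [one_mul, ← ENNReal.ofReal_mul hδ.le, ← ENNReal.ofReal_mul hM,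
        ← ENNReal.ofReal_add (by positivity) (by positivity),
        ← ENNReal.ofReal_add (by positivity) (by positivity)]
      exact ENNReal.ofReal_le_ofReal (cost_pointwise hδ hR x y))
  have hl := le_lintegral_mixDens h0 h1 v
    (h := fun x => ENNReal.ofReal ((max (‖x‖ - R) 0) ^ 2)) (by fun_prop)
  have hl2 : ENNReal.ofReal (2 * ‖v‖ ^ 2) ≤ ∫⁻ z, (ENNReal.ofReal ((max (‖z + v‖ - R) 0) ^ 2) +
      ENNReal.ofReal ((max (‖z + -v‖ - R) 0) ^ 2)) ∂(stdGauss n) +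
      ENNReal.ofReal (4 * R * (∫ z, ‖z‖ ^ (1 : ℝ) ∂(stdGauss n) + ‖v‖)) := by
    have hI : Integrable (fun z : En n => 4 * R * (‖z‖ ^ (1 : ℝ) + ‖v‖)) (stdGauss n) :=
      (hI1.add (integrable_const _)).const_mul _
    have he : 4 * R * (∫ z, ‖z‖ ^ (1 : ℝ) ∂(stdGauss n) + ‖v‖) =
        ∫ z, 4 * R * (‖z‖ ^ (1 : ℝ) + ‖v‖) ∂(stdGauss n) := by
      rw [integral_const_mul, integral_add hI1 (integrable_const _), integral_const,
        probReal_univ, one_smul]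
    rw [he, ofReal_integral_eq_lintegral_ofReal hI (ae_of_all _ fun x => by positivity),
      ← lintegral_add_left (by fun_prop)]
    calc ENNReal.ofReal (2 * ‖v‖ ^ 2) = ∫⁻ z, ENNReal.ofReal (2 * ‖v‖ ^ 2) ∂(stdGauss n) := by simp
      _ ≤ _ := lintegral_mono fun z => by
        rw [← ENNReal.ofReal_add (by positivity) (by positivity),
          ← ENNReal.ofReal_add (by positivity) (by positivity)]
        apply ENNReal.ofReal_le_ofReal
        have hq : ∀ t : ℝ, 0 ≤ t → t ^ 2 - 2 * R * t ≤ (max (t - R) 0) ^ 2 := by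
          intro t ht
          rcases le_total t R with h | h
          · rw [max_eq_right (by linarith)]; nlinarith
          · rw [max_eq_left (by linarith)]; nlinarith
        have q1 := hq ‖z + v‖ (norm_nonneg _)
        have q2 := hq ‖z + -v‖ (norm_nonneg _)
        have pl := parallelogram_law_with_norm ℝ z v
        rw [sub_eq_add_neg] at pl
        have n1 := mul_le_mul_of_nonneg_left (norm_add_le z v) hR
        have n2 := mul_le_mul_of_nonneg_left (norm_add_le z (-v)) hR
        rw [norm_neg] at n2
        rw [Real.rpow_one]
        nlinarith [sq_nonneg ‖z‖]
  rw [lintegral_const_mul _ (by fun_prop), lintegral_const_mul _ (by fun_prop),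
    lintegral_sq_mixDens h0 h1, lintegral_exp_stdGauss n _ (by norm_num), one_mul,
    ← ENNReal.ofReal_toReal (transCost_mixDens_ne_top h0 h1 v two_pos),
    ← ENNReal.ofReal_mul hδ.le, ← ENNReal.ofReal_mul hM,
    ← ENNReal.ofReal_add (by positivity) (by positivity),
    ← ENNReal.ofReal_add (by positivity) (by positivity)] at hd
  have hm := mul_le_mul_right hl2 (ENNReal.ofReal ε)
  rw [mul_add, ← ENNReal.ofReal_mul h0.le, ← ENNReal.ofReal_mul h0.le] at hm
  have := hm.trans (add_le_add_left (hl.trans hd) _)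
  rw [← ENNReal.ofReal_add (by positivity) (by positivity),
    ENNReal.ofReal_le_ofReal_iff (by positivity)] at this
  linarith

/-! ### Choice of parameters -/

lemma tendsto_exp_neg_mul {c : ℝ} (hc : 0 < c) :
    Tendsto (fun K : ℝ => Real.exp (-c * K)) atTop (𝓝 0) := by
  simpa using tendsto_rpow_mul_exp_neg_mul_atTop_nhds_zero 0 c hc

lemma tendsto_mul_exp_neg_mul {c : ℝ} (hc : 0 < c) :
    Tendsto (fun K : ℝ => K * Real.exp (-c * K)) atTop (𝓝 0) := by
  simpa using tendsto_rpow_mul_exp_neg_mul_atTop_nhds_zero 1 c hc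

/-- The transport error tends to zero when `ε = e^{-qK}`, `|v| = e^K`, `δ = e^{-2K}`, `R = K`. -/
lemma tendsto_transport_error {q : ℝ} (hq : 1 < q) (m₁ m₂ C : ℝ) :
    Tendsto (fun K : ℝ => 4 * Real.exp (-q * K) * K * (m₁ + Real.exp K) +
      Real.exp (-2 * K) * (m₂ + 2 * Real.exp (-q * K) * Real.exp K ^ 2) +
      8 / Real.exp (-2 * K) * Real.exp (-K ^ 2 / 8) * C) atTop (𝓝 0) := by
  have t1 := (tendsto_mul_exp_neg_mul (show 0 < q by linarith)).const_mul (4 * m₁)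
  have t2 := (tendsto_mul_exp_neg_mul (show 0 < q - 1 by linarith)).const_mul 4
  have t3 := (tendsto_exp_neg_mul (show (0 : ℝ) < 2 by norm_num)).const_mul m₂
  have t4 := (tendsto_exp_neg_mul (show 0 < q by linarith)).const_mul 2
  have t5 : Tendsto (fun K : ℝ => Real.exp (2 * K - K ^ 2 / 8)) atTop (𝓝 0) := by
    refine squeeze_zero' (.of_forall fun K => (Real.exp_pos _).le) ?_
      (tendsto_exp_neg_mul one_pos)
    filter_upwards [eventually_ge_atTop 24] with K hK
    apply Real.exp_le_exp.2
    nlinarith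
  have t := (((t1.add t2).add t3).add t4).add (t5.const_mul (8 * C))
  simp only [mul_zero, add_zero] at t
  refine t.congr fun K => ?_
  have e1 : Real.exp (-(q - 1) * K) = Real.exp (-q * K) * Real.exp K := by
    rw [← Real.exp_add]; ring_nf
  have e2 : Real.exp K ^ 2 = Real.exp (2 * K) := by rw [← Real.exp_nat_mul]; norm_num
  have e3 : Real.exp (2 * K - K ^ 2 / 8) = Real.exp (2 * K) * Real.exp (-K ^ 2 / 8) := by
    rw [← Real.exp_add]; ring_nf
  have e4 : Real.exp (-2 * K) = (Real.exp (2 * K))⁻¹ := by rw [← Real.exp_neg]; ring_nf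
  rw [e1, e2, e3, e4]
  have := (Real.exp_pos (2 * K)).ne'
  field_simp
  ring

lemma tendsto_entropy_error {q : ℝ} (hq : 1 < q) :
    Tendsto (fun K : ℝ => 2 * (Real.exp (-q * K) * Real.log (Real.exp (-q * K))) +
      (1 - 2 * Real.exp (-q * K)) * Real.log (1 - 2 * Real.exp (-q * K))) atTop (𝓝 0) := by
  have t0 := tendsto_exp_neg_mul (show 0 < q by linarith)
  have hc : Continuous fun t : ℝ => 2 * (t * Real.log t) +
      (1 - 2 * t) * Real.log (1 - 2 * t) :=
    (Real.continuous_mul_log.const_mul 2).add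
      (Real.continuous_mul_log.comp (f := fun t : ℝ => 1 - 2 * t) (by fun_prop))
  have h := (hc.tendsto 0).comp t0
  have hz : 2 * ((0 : ℝ) * Real.log 0) + (1 - 2 * 0) * Real.log (1 - 2 * 0) = 0 := by simp
  rw [hz] at h
  exact h

/-- Instability of Talagrand's inequality in `W_p`, `p > 1`. -/
theorem talagrand_instability_Wp (n : ℕ) (hn : 1 ≤ n) (p : ℝ) (hp : 1 < p) :
    ∃ f : ℕ → En n → ℝ,
      (∀ k x, 0 ≤ f k x) ∧
      (∀ k, IsProbabilityMeasure (densMeasure (f k))) ∧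
      (∀ k, IsCentered (densMeasure (f k))) ∧
      (∀ k, Integrable (fun x => ‖x‖ ^ (2 : ℝ)) (densMeasure (f k))) ∧
      Tendsto (fun k => talDeficit (f k)) atTop (𝓝 0) ∧
      Tendsto (fun k => wasserstein p (densMeasure (f k)) (stdGauss n)) atTop atTop := by
  -- An exponent strictly between `1` and `p`.
  set q : ℝ := (1 + p) / 2 with hq
  have hq1 : 1 < q := by linarith
  have hqp : q < p := by linarith
  let e : En n := EuclideanSpace.single ⟨0, hn⟩ 1
  set a : ℕ → ℝ := fun k => (k : ℝ) + 1 with ha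
  have hta : Tendsto a atTop atTop :=
    tendsto_atTop_add_const_right _ _ tendsto_natCast_atTop_atTop
  set ε : ℕ → ℝ := fun k => Real.exp (-q * a k) with hε
  set v : ℕ → En n := fun k => Real.exp (a k) • e with hv
  have hvn : ∀ k, ‖v k‖ = Real.exp (a k) := fun k => by
    simp [hv, e, norm_smul]
  have ha1 : ∀ k, 1 ≤ a k := fun k => by simp [ha]
  have h0 : ∀ k, 0 < ε k := fun k => Real.exp_pos _
  have h1 : ∀ k, 2 * ε k < 1 := fun k => by
    have h2 : ε k ≤ Real.exp (-1) := Real.exp_le_exp.2 (by nlinarith [ha1 k])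
    have := Real.exp_neg_one_lt_d9
    linarith
  refine ⟨fun k => mixDens (ε k) (v k), fun k x => ?_,
    fun k => isProbabilityMeasure_mixDens (h0 k) (h1 k) _, fun k => isCentered_mixDens _,
    fun k => integrable_sq_mixDens (h0 k) (h1 k) _, ?_, ?_⟩
  · have := shiftDens_pos (v k) x
    have := shiftDens_pos (-v k) x
    have := h0 k
    have := h1 k
    have : 0 ≤ 1 - 2 * ε k := by linarith
    unfold mixDens
    positivity
  · have hW : ∀ k, wasserstein 2 (densMeasure (mixDens (ε k) (v k))) (stdGauss n) ^ 2 =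
        (transCost 2 (densMeasure (mixDens (ε k) (v k))) (stdGauss n)).toReal := fun k => by
      rw [wasserstein_eq, ← Real.rpow_two, ← Real.rpow_mul ENNReal.toReal_nonneg]
      norm_num
    have tE := ((tendsto_entropy_error hq1).comp hta).const_mul 2
    have tT := (tendsto_transport_error hq1 (∫ z, ‖z‖ ^ (1 : ℝ) ∂(stdGauss n))
      (∫ z, ‖z‖ ^ (2 : ℝ) ∂(stdGauss n)) ((1 - 2 * (1 / 4)) ^ (-(n : ℝ) / 2))).comp hta
    rw [mul_zero] at tE
    refine tendsto_of_tendsto_of_tendsto_of_le_of_le tE tT (fun k => ?_) (fun k => ?_)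
    · have hH := (relEnt_mixDens_bounds (h0 k) (h1 k) (v k)).1
      have hU := ENNReal.toReal_mono ENNReal.ofReal_ne_top
        (transCost_mixDens_le (h0 k) (h1 k) (v k) two_pos)
      rw [ENNReal.toReal_ofReal (by have := h0 k; positivity), Real.rpow_two] at hU
      simp only [talDeficit, hW, Function.comp_apply]
      linarith
    · have hH := (relEnt_mixDens_bounds (h0 k) (h1 k) (v k)).2
      have hL := transCost_lower_two (h0 k) (h1 k) (Real.exp_pos (-2 * a k))
        (zero_le_one.trans (ha1 k)) (v k)
      rw [hvn] at hH hL
      simp only [talDeficit, hW, Function.comp_apply]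
      linarith
  · simp_rw [wasserstein_eq]
    refine (tendsto_rpow_atTop (by positivity)).comp ?_
    have hg : Tendsto (fun k => (2 ^ (p - 1) : ℝ)⁻¹ * Real.exp ((p - q) * a k) -
        ∫ z, ‖z‖ ^ p ∂(stdGauss n)) atTop atTop := by
      refine tendsto_atTop_add_const_right _ _ (Tendsto.const_mul_atTop (by positivity) ?_)
      exact Real.tendsto_exp_atTop.comp (hta.const_mul_atTop (by linarith))
    refine tendsto_atTop_mono (fun k => ?_) hg
    have hL := transCost_lower_p (h0 k) (h1 k) (v k) hp.le
    have he : ε k * ‖v k‖ ^ p = Real.exp ((p - q) * a k) := by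
      rw [hvn, ← Real.exp_mul, ← Real.exp_add]
      ring_nf
    rw [he] at hL
    have h2 : (0 : ℝ) < 2 ^ (p - 1) := by positivity
    rw [← inv_mul_le_iff₀ h2] at hL
    linarith
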